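/- Let R be an affine k-algebra which is a finite module over its center Z(R), k a field, and suppose R is Krull homogeneous. Then R is equicodimensional: every maximal ideal of R has height equal to Kdim(R). -/

import Mathlib

/-- A two-sided ideal of a (possibly noncommutative) ring is prime. -/
def IsPrimeTS {R : Type*} [Ring R] (P : TwoSidedIdeal R) : Prop :=
  P ≠ ⊤ ∧ ∀ a b : R, (∀ r : R, a * r * b ∈ P) → a ∈ P ∨ b ∈ P

/-- Height of an element `P` in a poset with respect to a predicate (`prime`):
the supremum of lengths of strictly increasing chains of elements satisfying the
predicate and ending at `P`. -/
noncomputable def primeChainHeight {α : Type*} [Preorder α] (isP : α → Prop) (P : α) : ℕ∞ :=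
  sSup {n : ℕ∞ | ∃ m : ℕ, n = (m : ℕ∞) ∧ ∃ f : Fin (m + 1) → α,
    StrictMono f ∧ (∀ i, isP (f i)) ∧ f (Fin.last m) = P}

/-- Height (codimension) of a two-sided ideal: the supremum of lengths of chains of
prime two-sided ideals descending from it. -/
noncomputable def tsHeight {R : Type*} [Ring R] (P : TwoSidedIdeal R) : ℕ∞ :=
  primeChainHeight IsPrimeTS P

/-- Height of an ideal of a commutative ring. -/
noncomputable def cHeight {C : Type*} [CommRing C] (p : Ideal C) : ℕ∞ :=
  primeChainHeight Ideal.IsPrime p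

/-- Contraction `P ∩ C` of a two-sided ideal of `R` to the central subring `C`
(given via the algebra structure map, whose image is central). -/
def contractTS {C R : Type*} [CommRing C] [Ring R] [Algebra C R]
    (P : TwoSidedIdeal R) : Ideal C :=
  Ideal.comap (algebraMap C R) (TwoSidedIdeal.asIdeal P)

/-- A two-sided ideal is maximal. -/
def IsMaximalTS {R : Type*} [Ring R] (M : TwoSidedIdeal R) : Prop :=
  M ≠ ⊤ ∧ ∀ J : TwoSidedIdeal R, M < J → J = ⊤

/-- Krull dimension of a (possibly noncommutative) ring: the supremum of the
heights of its prime two-sided ideals. -/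
noncomputable def tsKdim (R : Type*) [Ring R] : ℕ∞ :=
  ⨆ P : {P : TwoSidedIdeal R // IsPrimeTS P}, tsHeight P.1

/-- Krull dimension of a commutative ring: the supremum of heights of primes. -/
noncomputable def cKdim (C : Type*) [CommRing C] : ℕ∞ :=
  ⨆ p : {p : Ideal C // p.IsPrime}, cHeight p.1

open Filter in
/-- `DevLE n a b` : the deviation (in the sense of Gabriel–Rentschler) of the
interval `[a, b]` in a poset is at most `n`. -/
def DevLE {α : Type*} [Preorder α] : ℕ → α → α → Prop
  | 0, a, b => ∀ f : ℕ → α, Antitone f → (∀ i, a ≤ f i) → f 0 ≤ b →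
      ∀ᶠ i in atTop, f (i + 1) = f i
  | n + 1, a, b => ∀ f : ℕ → α, Antitone f → (∀ i, a ≤ f i) → f 0 ≤ b →
      ∀ᶠ i in atTop, DevLE n (f (i + 1)) (f i)

/-- The Krull dimension (Gabriel–Rentschler deviation of the submodule lattice)
of a module, valued in `ℕ∞`. -/
noncomputable def moduleKdim (R M : Type*) [Ring R] [AddCommGroup M] [Module R M] : ℕ∞ :=
  sInf {n : ℕ∞ | ∃ m : ℕ, n = m ∧ DevLE m (⊥ : Submodule R M) ⊤}

/-!
By Artin–Tate and Noether normalization, `R` is a finite module over a central polynomial ring `A`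
in `d` variables. If some `a ≠ 0` in `A` killed some `x ≠ 0`, then `Rx` would be a finite module
over `A ⧸ (a)`, so `Kdim (Rx) < d`. But `d ≤ Kdim R`: a chain of primes of `A` lifts to a chain of
primes of `R`, and along it the Krull dimension of the factor rings strictly drops, because an
element of `A` in the larger prime but not in the smaller one acts injectively, but not
surjectively, modulo the smaller one.
So homogeneity makes `R` torsion-free over `A`. Since `A` is integrally closed, going down then
holds for `A → R`, and together with incomparability this shows that contraction to `A` preserves
the heights of primes. It also takes maximal ideals to maximal ideals, and every maximal ideal of
`A` has height `d`.
-/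

open Filter Polynomial TensorProduct

section Deviation

/-- `DevLT n a b`: the deviation of the interval `[a, b]` is less than `n`, where a trivial
interval has deviation `-∞`. It makes the two clauses of `DevLE` uniform (see `devLE_iff`). -/
def DevLT {α : Type*} [Preorder α] : ℕ → α → α → Prop
  | 0, a, b => a = b
  | n + 1, a, b => DevLE n a b

theorem devLE_iff {α : Type*} [Preorder α] {n : ℕ} {a b : α} :
    DevLE n a b ↔ ∀ f : ℕ → α, Antitone f → (∀ i, a ≤ f i) → f 0 ≤ b →
      ∀ᶠ i in atTop, DevLT n (f (i + 1)) (f i) := by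
  cases n <;> rfl

variable {α β : Type*} [PartialOrder α] [PartialOrder β]

theorem DevLT.of_strictMonoOn {n : ℕ} {φ : α → β} {a b : α} {a' b' : β} (hab : a ≤ b)
    (hφ : StrictMonoOn φ (Set.Icc a b)) (ha : a' ≤ φ a) (hb : φ b ≤ b') (h : DevLT n a' b') :
    DevLT n a b := by
  induction n generalizing a b a' b' with
  | zero =>
    obtain rfl : a' = b' := h
    exact hab.eq_of_not_lt fun hlt =>
      (hφ (Set.left_mem_Icc.2 hab) (Set.right_mem_Icc.2 hab) hlt).not_ge (hb.trans ha)
  | succ n ih =>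
    refine devLE_iff.2 fun f hf haf hfb => ?_
    have hmem (i : ℕ) : f i ∈ Set.Icc a b := ⟨haf i, (hf i.zero_le).trans hfb⟩
    have hφ_anti : Antitone fun i => φ (f i) := fun i j hij =>
      hφ.monotoneOn (hmem j) (hmem i) (hf hij)
    have hφ_ge (i : ℕ) : a' ≤ φ (f i) :=
      ha.trans (hφ.monotoneOn (Set.left_mem_Icc.2 hab) (hmem i) (haf i))
    have hφ_le : φ (f 0) ≤ b' :=
      (hφ.monotoneOn (hmem 0) (Set.right_mem_Icc.2 hab) hfb).trans hb
    filter_upwards [devLE_iff.1 h _ hφ_anti hφ_ge hφ_le] with i hi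
    exact ih (hf i.le_succ) (hφ.mono (Set.Icc_subset_Icc (hmem _).1 (hmem i).2)) le_rfl le_rfl hi

theorem DevLE.of_strictMonoOn {n : ℕ} {φ : α → β} {a b : α} {a' b' : β} (hab : a ≤ b)
    (hφ : StrictMonoOn φ (Set.Icc a b)) (ha : a' ≤ φ a) (hb : φ b ≤ b') (h : DevLE n a' b') :
    DevLE n a b :=
  DevLT.of_strictMonoOn (n := n + 1) hab hφ ha hb h

theorem DevLT.succ {n : ℕ} {a b : α} (h : DevLT n a b) : DevLT (n + 1) a b := by
  induction n generalizing a b with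
  | zero =>
    obtain rfl : a = b := h
    refine devLE_iff.2 fun f hf haf hfa => Eventually.of_forall fun i => ?_
    have hconst (j : ℕ) : f j = a := ((hf j.zero_le).trans hfa).antisymm (haf j)
    exact (hconst _).trans (hconst _).symm
  | succ n ih =>
    exact devLE_iff.2 fun f hf haf hfb => (devLE_iff.1 h f hf haf hfb).mono fun _ => ih

theorem DevLT.refl (n : ℕ) (a : α) : DevLT n a a := by
  induction n with
  | zero => rfl
  | succ n ih => exact ih.succ

theorem DevLE.mono {m n : ℕ} (hmn : m ≤ n) {a b : α} (h : DevLE m a b) : DevLE n a b :=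
  Nat.le_induction h (fun i _ => DevLT.succ (n := i + 1)) n hmn

theorem devLE_of_forall_gt {n : ℕ} {a b : α} (h : ∀ c, a < c → c ≤ b → DevLT n c b) :
    DevLE n a b := by
  refine devLE_iff.2 fun f hf haf hfb => ?_
  have hfb' (i : ℕ) : f i ≤ b := (hf i.zero_le).trans hfb
  by_cases hreach : ∃ i, f i = a
  · obtain ⟨i₀, hi₀⟩ := hreach
    have hconst (j : ℕ) (hj : i₀ ≤ j) : f j = a := (hi₀ ▸ hf hj).antisymm (haf j)
    filter_upwards [eventually_ge_atTop i₀] with i hi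
    rw [hconst i hi, hconst (i + 1) (by omega)]
    exact DevLT.refl n a
  · have hlt (i : ℕ) : a < f i := (haf i).lt_of_ne fun e => hreach ⟨i, e.symm⟩
    exact Eventually.of_forall fun i => (h _ (hlt (i + 1)) (hfb' _)).of_strictMonoOn
      (hf i.le_succ) (strictMono_id.strictMonoOn _) le_rfl (hfb' i)

theorem DevLT.of_inf_of_sup {γ : Type*} [Lattice γ] [IsModularLattice γ] {n : ℕ} {a b : γ} (c : γ)
    (hab : a ≤ b) (hinf : DevLT n (a ⊓ c) (b ⊓ c)) (hsup : DevLT n (a ⊔ c) (b ⊔ c)) :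
    DevLT n a b := by
  induction n generalizing a b with
  | zero => exact eq_of_le_of_inf_le_of_sup_le hab (Eq.ge hinf) (Eq.ge hsup)
  | succ n ih =>
    refine devLE_iff.2 fun f hf haf hfb => ?_
    filter_upwards [
      devLE_iff.1 hinf (fun i => f i ⊓ c) (fun _ _ hij => inf_le_inf_right c (hf hij))
        (fun i => inf_le_inf_right c (haf i)) (inf_le_inf_right c hfb),
      devLE_iff.1 hsup (fun i => f i ⊔ c) (fun _ _ hij => sup_le_sup_right (hf hij) c)
        (fun i => sup_le_sup_right (haf i) c) (sup_le_sup_right hfb c)] with i hi_inf hi_sup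
    exact ih (hf i.le_succ) hi_inf hi_sup

theorem DevLE.trans {γ : Type*} [Lattice γ] [IsModularLattice γ] {n : ℕ} {a b c : γ}
    (hab : a ≤ b) (hbc : b ≤ c) (h : DevLE n a b) (h' : DevLE n b c) : DevLE n a c := by
  refine DevLT.of_inf_of_sup (n := n + 1) b (hab.trans hbc) ?_ ?_
  · rwa [inf_eq_left.2 hab, inf_eq_right.2 hbc]
  · rwa [sup_eq_right.2 hab, sup_eq_left.2 hbc]

end Deviation

section ModuleKdim

variable {R M N : Type*} [Ring R] [AddCommGroup M] [Module R M] [AddCommGroup N] [Module R N]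

theorem moduleKdim_le_coe_iff {n : ℕ} :
    moduleKdim R M ≤ n ↔ DevLE n (⊥ : Submodule R M) ⊤ := by
  refine ⟨fun h => ?_, fun h => sInf_le ⟨n, rfl, h⟩⟩
  obtain ⟨_, ⟨m, rfl, hdev⟩, hm⟩ := sInf_lt_iff.1 (h.trans_lt (Nat.cast_lt.2 n.lt_succ_self))
  exact hdev.mono (Nat.lt_succ_iff.1 (Nat.cast_lt.1 hm))

theorem moduleKdim_le_of_forall_devLE {R' M' : Type*} [Ring R'] [AddCommGroup M'] [Module R' M']
    (h : ∀ n : ℕ, DevLE n (⊥ : Submodule R' M') ⊤ → DevLE n (⊥ : Submodule R M) ⊤) :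
    moduleKdim R M ≤ moduleKdim R' M' := by
  refine le_sInf ?_
  rintro _ ⟨n, rfl, hn⟩
  exact moduleKdim_le_coe_iff.2 (h n hn)

theorem moduleKdim_le_of_surjective (f : M →ₗ[R] N) (hf : Function.Surjective f) :
    moduleKdim R N ≤ moduleKdim R M :=
  moduleKdim_le_of_forall_devLE fun _ => .of_strictMonoOn bot_le
    ((Submodule.comap_strictMono_of_surjective hf).strictMonoOn _) bot_le le_top

theorem moduleKdim_le_restrictScalars (A : Type*) [Ring A] [Module A M] [SMul A R]
    [IsScalarTower A R M] : moduleKdim R M ≤ moduleKdim A M :=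
  moduleKdim_le_of_forall_devLE fun _ => .of_strictMonoOn bot_le
    ((Submodule.restrictScalarsEmbedding A R M).strictMono.strictMonoOn _) bot_le le_top

theorem strictMonoOn_submodule_map_Ici_ker (f : M →ₗ[R] N) :
    StrictMonoOn (Submodule.map f) (Set.Ici (LinearMap.ker f)) :=
  (Submodule.gc_map_comap f).monotone_l.monotoneOn _ |>.strictMonoOn_of_injOn <|
    Set.LeftInvOn.injOn (f₁' := Submodule.comap f) fun _ h => Submodule.comap_map_eq_self h

theorem strictMonoOn_submodule_comap_Iic_range (f : M →ₗ[R] N) :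
    StrictMonoOn (Submodule.comap f) (Set.Iic (LinearMap.range f)) :=
  (Submodule.gc_map_comap f).monotone_u.monotoneOn _ |>.strictMonoOn_of_injOn <|
    Set.LeftInvOn.injOn (f₁' := Submodule.map f) fun _ h => Submodule.map_comap_eq_self h

theorem moduleKdim_quotient_le_coe_iff {n : ℕ} {L : Submodule R M} :
    moduleKdim R (M ⧸ L) ≤ n ↔ DevLE n L ⊤ := by
  rw [moduleKdim_le_coe_iff]
  constructor
  · refine .of_strictMonoOn le_top ((strictMonoOn_submodule_map_Ici_ker L.mkQ).mono ?_)
      bot_le le_top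
    rw [L.ker_mkQ]
    exact Set.Icc_subset_Ici_self
  · refine .of_strictMonoOn bot_le ((Submodule.comap_strictMono_of_surjective
      L.mkQ_surjective).strictMonoOn _) ?_ le_top
    rw [Submodule.comap_bot, L.ker_mkQ]

theorem moduleKdim_le_coe_of_exact {L : Type*} [AddCommGroup L] [Module R L] {f : L →ₗ[R] M}
    {g : M →ₗ[R] N} (hfg : Function.Exact f g) {n : ℕ} (hL : moduleKdim R L ≤ n)
    (hN : moduleKdim R N ≤ n) : moduleKdim R M ≤ n := by
  rw [moduleKdim_le_coe_iff] at *
  refine DevLE.trans (b := LinearMap.range f) bot_le le_top ?_ ?_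
  · exact hL.of_strictMonoOn bot_le
      ((strictMonoOn_submodule_comap_Iic_range f).mono Set.Icc_subset_Iic_self) bot_le le_top
  · rw [← hfg.linearMap_ker_eq]
    exact hN.of_strictMonoOn le_top
      ((strictMonoOn_submodule_map_Ici_ker g).mono Set.Icc_subset_Ici_self) bot_le le_top

-- The chain `range (f ^ i)` has infinitely many factors, all isomorphic to `M ⧸ range f`.
theorem moduleKdim_quotient_range_add_one_le {f : Module.End R M} (hf : Function.Injective f)
    (hf' : ¬ Function.Surjective f) :
    moduleKdim R (M ⧸ LinearMap.range f) + 1 ≤ moduleKdim R M := by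
  refine le_sInf ?_
  rintro _ ⟨m, rfl, hm⟩
  have hsucc (i : ℕ) :
      LinearMap.range (f ^ (i + 1)) = (LinearMap.range f).map (f ^ i) := by
    rw [pow_succ, Module.End.mul_eq_comp, LinearMap.range_comp]
  have hanti : Antitone fun i => LinearMap.range (f ^ i) :=
    antitone_nat_of_succ_le fun i => hsucc i ▸ LinearMap.map_le_range
  obtain ⟨i, hi⟩ := (devLE_iff.1 hm _ hanti (fun _ => bot_le) le_top).exists
  have hdev : DevLT m (LinearMap.range f) ⊤ :=
    hi.of_strictMonoOn le_top
      ((Submodule.map_strictMono_of_injective (Module.End.iterate_injective hf i)).strictMonoOn _)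
      (hsucc i).le (by rw [Submodule.map_top])
  cases m with
  | zero => exact absurd (LinearMap.range_eq_top.1 hdev) hf'
  | succ m => exact_mod_cast add_le_add_left (moduleKdim_quotient_le_coe_iff.2 hdev) 1

end ModuleKdim

section Commutative

variable {A : Type*} [CommRing A]

theorem supportDim_quotient_add_one_le_of_lt {p I : Ideal A} [p.IsPrime] (hpI : p < I) :
    Module.supportDim A (A ⧸ I) + 1 ≤ Module.supportDim A (A ⧸ p) := by
  obtain ⟨x, hxI, hxp⟩ := SetLike.exists_of_lt hpI
  have hx (y : A ⧸ I) : x • y = 0 :=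
    Module.mem_annihilator.1 (by rwa [Ideal.annihilator_quotient]) y
  let π : QuotSMulTop x (A ⧸ p) →ₗ[A] A ⧸ I :=
    Submodule.liftQ _ (Submodule.factor hpI.le) fun y hy => by
      obtain ⟨z, -, rfl⟩ := (Submodule.mem_smul_pointwise_iff_exists _ _ _).1 hy
      rw [LinearMap.mem_ker, map_smul, hx]
  have hπ : Function.Surjective π :=
    .of_comp (g := Submodule.mkQ _) (Submodule.factor_surjective hpI.le)
  calc Module.supportDim A (A ⧸ I) + 1
      ≤ Module.supportDim A (QuotSMulTop x (A ⧸ p)) + 1 := by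
        gcongr
        exact Module.supportDim_le_of_surjective π hπ
    _ ≤ Module.supportDim A (A ⧸ p) := by
        refine Module.supportDim_quotSMulTop_succ_le_of_notMem_minimalPrimes fun q hq => ?_
        rw [Ideal.annihilator_quotient, Ideal.minimalPrimes_eq_subsingleton_self,
          Set.mem_singleton_iff] at hq
        rwa [hq]

variable [IsNoetherianRing A]

theorem moduleKdim_le_coe_of_forall_isPrime {n : ℕ}
    (hprime : ∀ p : Ideal A, p.IsPrime → Module.supportDim A (A ⧸ p) ≤ n →
      moduleKdim A (A ⧸ p) ≤ n)
    {N : Type*} [AddCommGroup N] [Module A N] [hN : Module.Finite A N]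
    (hdim : Module.supportDim A N ≤ n) : moduleKdim A N ≤ n := by
  revert hdim
  refine IsNoetherianRing.induction_on_isQuotientEquivQuotientPrime A hN
    (motive := fun L _ _ _ => Module.supportDim A L ≤ n → moduleKdim A L ≤ n) ?_ ?_ ?_
  · intro L _ _ _ _ _
    rw [moduleKdim_le_coe_iff, Subsingleton.elim ⊥ (⊤ : Submodule A L)]
    exact DevLT.refl (n + 1) _
  · intro L _ _ _ p e hL
    rw [Module.supportDim_eq_of_equiv e] at hL
    exact (moduleKdim_le_of_surjective _ e.symm.surjective).trans (hprime _ p.isPrime hL)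
  · intro L₁ _ _ _ L₂ _ _ _ L₃ _ _ _ f g hf hg hfg ih₁ ih₃ hL₂
    exact moduleKdim_le_coe_of_exact hfg
      (ih₁ ((Module.supportDim_le_of_injective f hf).trans hL₂))
      (ih₃ ((Module.supportDim_le_of_surjective g hg).trans hL₂))

theorem moduleKdim_quotient_le_coe_of_isPrime {n : ℕ} (p : Ideal A) [p.IsPrime]
    (hdim : Module.supportDim A (A ⧸ p) ≤ n) : moduleKdim A (A ⧸ p) ≤ n := by
  induction n generalizing p with
  | zero =>
    refine moduleKdim_quotient_le_coe_iff.2 (devLE_of_forall_gt fun I hpI _ => ?_)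
    have hI : Module.supportDim A (A ⧸ I) = ⊥ := (ENat.WithBot.add_one_le_zero_iff _).1 <|
      (supportDim_quotient_add_one_le_of_lt hpI).trans hdim
    exact Ideal.Quotient.subsingleton_iff.1 ((Module.supportDim_eq_bot_iff_subsingleton A _).1 hI)
  | succ n ih =>
    refine moduleKdim_quotient_le_coe_iff.2 (devLE_of_forall_gt fun I hpI _ => ?_)
    have hI : Module.supportDim A (A ⧸ I) ≤ n := ENat.WithBot.add_le_add_one_right_iff.1 <|
      (supportDim_quotient_add_one_le_of_lt hpI).trans hdim
    exact moduleKdim_quotient_le_coe_iff.1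
      (moduleKdim_le_coe_of_forall_isPrime (fun q _ hq => ih q hq) hI)

theorem moduleKdim_le_supportDim (N : Type*) [AddCommGroup N] [Module A N] [Module.Finite A N]
    [Nontrivial N] : (moduleKdim A N : WithBot ℕ∞) ≤ Module.supportDim A N := by
  obtain ⟨d, hd⟩ := WithBot.ne_bot_iff_exists.1 (Module.supportDim_ne_bot_of_nontrivial A N)
  rw [← hd, WithBot.coe_le_coe]
  induction d with
  | top => exact le_top
  | coe d =>
    exact moduleKdim_le_coe_of_forall_isPrime
      (fun p _ => moduleKdim_quotient_le_coe_of_isPrime p) hd.ge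

theorem moduleKdim_add_one_le_ringKrullDim [IsDomain A] {N : Type*} [AddCommGroup N] [Module A N]
    [Module.Finite A N] [Nontrivial N] (hN : Module.annihilator A N ≠ ⊥) :
    (moduleKdim A N : WithBot ℕ∞) + 1 ≤ ringKrullDim A :=
  calc (moduleKdim A N : WithBot ℕ∞) + 1
      ≤ Module.supportDim A N + 1 := by
        gcongr
        exact moduleKdim_le_supportDim N
    _ = Module.supportDim A (A ⧸ Module.annihilator A N) + 1 := by
        rw [Module.supportDim_quotient_eq_ringKrullDim,
          Module.supportDim_eq_ringKrullDim_quotient_annihilator]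
    _ ≤ Module.supportDim A (A ⧸ (⊥ : Ideal A)) :=
        supportDim_quotient_add_one_le_of_lt (bot_lt_iff_ne_bot.2 hN)
    _ ≤ ringKrullDim A := Module.supportDim_le_ringKrullDim A _

end Commutative

section PrimeTS

variable {R : Type*} [Ring R]

theorem one_notMem_of_ne_top {P : TwoSidedIdeal R} (hP : P ≠ ⊤) : (1 : R) ∉ P :=
  fun h => hP ((TwoSidedIdeal.one_mem_iff P).1 h)

/-- An m-system: a nonempty set `S` such that `x R y` meets `S` for all `x, y ∈ S`. These are the
noncommutative analogue of multiplicative sets; the complement of a prime ideal is one. -/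
def IsMSystem (S : Set R) : Prop :=
  S.Nonempty ∧ ∀ x ∈ S, ∀ y ∈ S, ∃ r, x * r * y ∈ S

/-- The left colon ideal `{x | x R b ⊆ J}`. Primality of `J` is tested on it and `rightColonTS`,
which are two-sided, rather than on the one-sided ideals `{x | x b ∈ J}`. -/
def leftColonTS (J : TwoSidedIdeal R) (b : R) : TwoSidedIdeal R :=
  TwoSidedIdeal.mk' {x | ∀ r, x * r * b ∈ J}
    (fun r => by simp [J.zero_mem])
    (fun hx hy r => by simpa [add_mul] using J.add_mem (hx r) (hy r))
    (fun hx r => by simpa using hx r)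
    (fun {x y} hy r => by simpa [mul_assoc] using J.mul_mem_left x _ (hy r))
    (fun {x y} hx r => by simpa [mul_assoc] using hx (y * r))

theorem mem_leftColonTS {J : TwoSidedIdeal R} {b x : R} :
    x ∈ leftColonTS J b ↔ ∀ r, x * r * b ∈ J :=
  TwoSidedIdeal.mem_mk' _ _ _ _ _ _ _

/-- The right colon ideal `{y | a R y ⊆ J}`, the mirror image of `leftColonTS`. -/
def rightColonTS (J : TwoSidedIdeal R) (a : R) : TwoSidedIdeal R :=
  TwoSidedIdeal.mk' {y | ∀ r, a * r * y ∈ J}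
    (fun r => by simp [J.zero_mem])
    (fun hx hy r => by simpa [mul_add] using J.add_mem (hx r) (hy r))
    (fun hx r => by simpa using hx r)
    (fun {x y} hy r => by simpa [mul_assoc] using hy (r * x))
    (fun {x y} hx r => by simpa [mul_assoc] using J.mul_mem_right _ y (hx r))

theorem mem_rightColonTS {J : TwoSidedIdeal R} {a y : R} :
    y ∈ rightColonTS J a ↔ ∀ r, a * r * y ∈ J :=
  TwoSidedIdeal.mem_mk' _ _ _ _ _ _ _

theorem exists_upperBound_disjoint_of_isChain {S : Set R} {c : Set (TwoSidedIdeal R)}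
    (hc : IsChain (· ≤ ·) c) (hne : c.Nonempty) (hS : ∀ J ∈ c, Disjoint S (J : Set R)) :
    ∃ U : TwoSidedIdeal R, Disjoint S (U : Set R) ∧ ∀ J ∈ c, J ≤ U := by
  obtain ⟨J₀, hJ₀⟩ := hne
  let U : TwoSidedIdeal R := TwoSidedIdeal.mk' {x | ∃ J ∈ c, x ∈ J}
    ⟨J₀, hJ₀, J₀.zero_mem⟩
    (by
      rintro x y ⟨J, hJ, hx⟩ ⟨K, hK, hy⟩
      rcases hc.total hJ hK with hJK | hKJ
      · exact ⟨K, hK, K.add_mem (hJK hx) hy⟩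
      · exact ⟨J, hJ, J.add_mem hx (hKJ hy)⟩)
    (fun ⟨J, hJ, hx⟩ => ⟨J, hJ, J.neg_mem hx⟩)
    (fun ⟨J, hJ, hy⟩ => ⟨J, hJ, J.mul_mem_left _ _ hy⟩)
    (fun ⟨J, hJ, hx⟩ => ⟨J, hJ, J.mul_mem_right _ _ hx⟩)
  have hU (x : R) : x ∈ U ↔ ∃ J ∈ c, x ∈ J := TwoSidedIdeal.mem_mk' _ _ _ _ _ _ _
  refine ⟨U, Set.disjoint_left.2 fun x hxS hxU => ?_, fun J hJ x hx => (hU x).2 ⟨J, hJ, hx⟩⟩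
  obtain ⟨J, hJ, hx⟩ := (hU x).1 hxU
  exact Set.disjoint_left.1 (hS J hJ) hxS hx

theorem isPrimeTS_of_maximal_disjoint {S : Set R} (hS : IsMSystem S) {J : TwoSidedIdeal R}
    (hJ : Disjoint S (J : Set R))
    (hmax : ∀ L : TwoSidedIdeal R, J ≤ L → Disjoint S (L : Set R) → L = J) : IsPrimeTS J := by
  obtain ⟨⟨s, hs⟩, hmul⟩ := hS
  have hmeet {L : TwoSidedIdeal R} (hJL : J ≤ L) {a : R} (haL : a ∈ L) (haJ : a ∉ J) :
      ∃ x ∈ S, x ∈ L := by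
    by_contra! hcon
    exact haJ (hmax L hJL (Set.disjoint_left.2 hcon) ▸ haL)
  refine ⟨fun htop => Set.disjoint_left.1 hJ hs (htop ▸ trivial), fun a b hab => ?_⟩
  by_contra! hcon
  obtain ⟨x, hxS, hx⟩ := hmeet
    (fun x hx => mem_leftColonTS.2 fun r => J.mul_mem_right _ _ (J.mul_mem_right _ _ hx))
    (mem_leftColonTS.2 hab) hcon.1
  obtain ⟨y, hyS, hy⟩ := hmeet
    (fun y hy => mem_rightColonTS.2 fun r => J.mul_mem_left _ _ hy)
    (mem_rightColonTS.2 (mem_leftColonTS.1 hx)) hcon.2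
  obtain ⟨r, hr⟩ := hmul x hxS y hyS
  exact Set.disjoint_left.1 hJ hr (mem_rightColonTS.1 hy r)

theorem exists_isPrimeTS_ge_disjoint {S : Set R} (hS : IsMSystem S) {I : TwoSidedIdeal R}
    (hI : Disjoint S (I : Set R)) :
    ∃ P, IsPrimeTS P ∧ I ≤ P ∧ Disjoint S (P : Set R) := by
  obtain ⟨P, hIP, hP⟩ := zorn_le_nonempty₀ {J : TwoSidedIdeal R | Disjoint S (J : Set R)}
    (fun c hcS hc J hJ => exists_upperBound_disjoint_of_isChain hc ⟨J, hJ⟩ hcS) I hI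
  exact ⟨P, isPrimeTS_of_maximal_disjoint hS hP.prop
    fun L hPL hL => (hP.eq_of_le hL hPL).symm, hIP, hP.prop⟩

theorem IsMaximalTS.isPrimeTS {M : TwoSidedIdeal R} (hM : IsMaximalTS M) : IsPrimeTS M := by
  refine isPrimeTS_of_maximal_disjoint (S := {1}) ⟨Set.singleton_nonempty 1, by simp⟩
    (Set.disjoint_singleton_left.2 (one_notMem_of_ne_top hM.1)) fun L hML hL => ?_
  by_contra hne
  exact Set.disjoint_left.1 hL rfl (hM.2 L (hML.lt_of_ne' hne) ▸ trivial)

theorem IsPrimeTS.bot_quotient {P : TwoSidedIdeal R} (hP : IsPrimeTS P) :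
    IsPrimeTS (⊥ : TwoSidedIdeal (R ⧸ P.asIdeal)) := by
  have hmk (x : R) :
      Ideal.Quotient.mk P.asIdeal x ∈ (⊥ : TwoSidedIdeal (R ⧸ P.asIdeal)) ↔ x ∈ P := by
    rw [TwoSidedIdeal.mem_bot, Ideal.Quotient.eq_zero_iff_mem, TwoSidedIdeal.mem_asIdeal]
  refine ⟨fun htop => one_notMem_of_ne_top hP.1 ((hmk 1).1 (htop ▸ trivial)), ?_⟩
  intro a b hab
  obtain ⟨a, rfl⟩ := Ideal.Quotient.mk_surjective a
  obtain ⟨b, rfl⟩ := Ideal.Quotient.mk_surjective b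
  rw [hmk, hmk]
  refine hP.2 a b fun r => ?_
  rw [← hmk, map_mul, map_mul]
  exact hab _

end PrimeTS

section Contraction

variable {A R : Type*} [CommRing A] [Ring R] [Algebra A R]

theorem mem_contractTS {P : TwoSidedIdeal R} {a : A} :
    a ∈ contractTS (C := A) P ↔ algebraMap A R a ∈ P := by
  rw [contractTS, Ideal.mem_comap, TwoSidedIdeal.mem_asIdeal]

theorem contractTS_mono {P Q : TwoSidedIdeal R} (hPQ : P ≤ Q) :
    contractTS (C := A) P ≤ contractTS Q :=
  Ideal.comap_mono (TwoSidedIdeal.asIdeal.monotone hPQ)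

theorem smul_mem_TS (I : TwoSidedIdeal R) (a : A) {x : R} (hx : x ∈ I) : a • x ∈ I := by
  rw [Algebra.smul_def]
  exact I.mul_mem_left _ _ hx

theorem IsPrimeTS.mem_of_smul_mem {P : TwoSidedIdeal R} (hP : IsPrimeTS P) {a : A}
    (ha : a ∉ contractTS P) {x : R} (hax : a • x ∈ P) : x ∈ P := by
  refine (hP.2 (algebraMap A R a) x fun r => ?_).resolve_left (mt mem_contractTS.2 ha)
  rw [mul_assoc, ← Algebra.smul_def, ← mul_smul_comm]
  exact P.mul_mem_left _ _ hax

theorem IsPrimeTS.contractTS_isPrime {P : TwoSidedIdeal R} (hP : IsPrimeTS P) :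
    (contractTS (C := A) P).IsPrime := by
  refine ⟨(Ideal.ne_top_iff_one _).2 fun h => one_notMem_of_ne_top hP.1 ?_, fun {a b} hab => ?_⟩
  · simpa [mem_contractTS] using h
  · rw [or_iff_not_imp_left]
    intro ha
    refine mem_contractTS.2 (hP.mem_of_smul_mem ha ?_)
    rwa [Algebra.smul_def, ← map_mul, ← mem_contractTS]

/-- The two-sided ideal `pR` of an `A`-algebra `R` generated by an ideal `p` of `A`. -/
def extendTS (R : Type*) [Ring R] [Algebra A R] (p : Ideal A) : TwoSidedIdeal R :=
  TwoSidedIdeal.mk' ((p • ⊤ : Submodule A R) : Set R)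
    (zero_mem _)
    add_mem
    neg_mem
    (fun {z x} hx => (Submodule.smul_le (P := (p • ⊤ : Submodule A R).comap
      (LinearMap.mulLeft A z))).2 (fun a ha y _ => by
        simpa [mul_smul_comm] using Submodule.smul_mem_smul ha Submodule.mem_top) hx)
    (fun {x z} hx => (Submodule.smul_le (P := (p • ⊤ : Submodule A R).comap
      (LinearMap.mulRight A z))).2 (fun a ha y _ => by
        simpa [smul_mul_assoc] using Submodule.smul_mem_smul ha Submodule.mem_top) hx)

theorem mem_extendTS {p : Ideal A} {x : R} : x ∈ extendTS R p ↔ x ∈ p • (⊤ : Submodule A R) :=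
  TwoSidedIdeal.mem_mk' _ _ _ _ _ _ _

theorem extendTS_le_iff {p : Ideal A} {P : TwoSidedIdeal R} :
    extendTS R p ≤ P ↔ p ≤ contractTS P := by
  refine ⟨fun h a ha => mem_contractTS.2 (h (mem_extendTS.2 ?_)), fun h x hx => ?_⟩
  · rw [Algebra.algebraMap_eq_smul_one]
    exact Submodule.smul_mem_smul ha trivial
  · refine Submodule.smul_induction_on (mem_extendTS.1 hx) (fun a ha y _ => ?_)
      fun _ _ => P.add_mem
    rw [Algebra.smul_def]
    exact P.mul_mem_right _ _ (mem_contractTS.1 (h ha))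

end Contraction

section LyingOver

variable {A R : Type*} [CommRing A] [Ring R] [Algebra A R] [Module.Finite A R]

theorem mem_of_algebraMap_mem_sup_extendTS {I : TwoSidedIdeal R} {p : Ideal A} [p.IsPrime]
    (hp : contractTS I ≤ p) {s : A} (hs : algebraMap A R s ∈ I ⊔ extendTS R p) : s ∈ p := by
  let N := R ⧸ I.asIdeal
  have hann : Module.annihilator A N ≤ p := fun a ha => hp <| mem_contractTS.2 <| by
    have h1 : a • (1 : N) = 0 := Module.mem_annihilator.1 ha 1
    rw [← Algebra.algebraMap_eq_smul_one] at h1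
    exact Ideal.Quotient.eq_zero_iff_mem.1 h1
  have hsupp : (⟨p, ‹_›⟩ : PrimeSpectrum A) ∈ Module.support A (N ⧸ (p • ⊤ : Submodule A N)) := by
    rw [Module.support_quotient]
    exact ⟨Module.mem_support_iff_of_finite.2 hann, Set.Subset.rfl⟩
  refine Module.mem_support_iff_of_finite.1 hsupp (Module.mem_annihilator.2 fun x => ?_)
  obtain ⟨x, rfl⟩ := Submodule.mkQ_surjective _ x
  obtain ⟨x, rfl⟩ := Ideal.Quotient.mk_surjective x
  obtain ⟨y, hy, z, hz, hyz⟩ := TwoSidedIdeal.mem_sup.1 hs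
  have hsx : s • Ideal.Quotient.mk I.asIdeal x = Ideal.Quotient.mk I.asIdeal (z * x) := by
    have hyx : Ideal.Quotient.mk I.asIdeal (y * x) = 0 :=
      Ideal.Quotient.eq_zero_iff_mem.2 (I.mul_mem_right _ _ hy)
    change Ideal.Quotient.mk I.asIdeal (s • x) = _
    rw [Algebra.smul_def, ← hyz, add_mul, map_add, hyx, zero_add]
  rw [← map_smul, Submodule.mkQ_apply, Submodule.Quotient.mk_eq_zero, hsx]
  have hmap : (p • ⊤ : Submodule A R).map (I.asIdeal.mkQ.restrictScalars A) ≤ p • ⊤ := by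
    rw [Submodule.map_smul'']
    exact Submodule.smul_mono le_rfl le_top
  exact hmap ⟨z * x, mem_extendTS.1 ((extendTS R p).mul_mem_right _ _ hz), rfl⟩

theorem exists_isPrimeTS_ge_contractTS_eq {I : TwoSidedIdeal R} {p : Ideal A} [hp : p.IsPrime]
    (hI : contractTS I ≤ p) : ∃ P, IsPrimeTS P ∧ I ≤ P ∧ contractTS P = p := by
  obtain ⟨P, hP, hIP, hdisj⟩ := exists_isPrimeTS_ge_disjoint
    (S := algebraMap A R '' (p : Set A)ᶜ) (I := I ⊔ extendTS R p) ⟨⟨_, 1, p.one_notMem, rfl⟩, by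
      rintro _ ⟨s, hs, rfl⟩ _ ⟨t, ht, rfl⟩
      exact ⟨1, s * t, hp.mul_notMem hs ht, by simp⟩⟩
    (Set.disjoint_left.2 <| by
      rintro _ ⟨s, hs, rfl⟩ hsI
      exact hs (mem_of_algebraMap_mem_sup_extendTS hI hsI))
  rw [sup_le_iff, extendTS_le_iff] at hIP
  refine ⟨P, hP, hIP.1, le_antisymm (fun a ha => ?_) hIP.2⟩
  by_contra hap
  exact Set.disjoint_left.1 hdisj ⟨a, hap, rfl⟩ (mem_contractTS.1 ha)

end LyingOver

section Artinian

variable {B : Type*} [Ring B]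

theorem IsPrimeTS.eq_bot_or_eq_bot_of_mul_eq_bot (hB : IsPrimeTS (⊥ : TwoSidedIdeal B))
    {I J : Ideal B} (hIJ : I * J = ⊥) : I = ⊥ ∨ J = ⊥ := by
  by_contra! hne
  obtain ⟨a, ha, ha0⟩ := Submodule.exists_mem_ne_zero_of_ne_bot hne.1
  obtain ⟨b, hb, hb0⟩ := Submodule.exists_mem_ne_zero_of_ne_bot hne.2
  have hab : a ∈ (⊥ : TwoSidedIdeal B) ∨ b ∈ (⊥ : TwoSidedIdeal B) := hB.2 a b fun r => by
    have h : a * (r * b) ∈ I * J := Ideal.mul_mem_mul ha (J.mul_mem_left r hb)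
    rwa [hIJ, Ideal.mem_bot, ← mul_assoc] at h
  exact hab.elim ha0 hb0

theorem IsPrimeTS.eq_bot_of_isNilpotent (hB : IsPrimeTS (⊥ : TwoSidedIdeal B)) {I : Ideal B}
    (hI : IsNilpotent I) : I = ⊥ := by
  obtain ⟨n, hn⟩ := hI
  induction n with
  | zero =>
    rw [Submodule.pow_zero, Ideal.one_eq_top] at hn
    exact le_bot_iff.1 (le_top.trans hn.le)
  | succ n ih =>
    rw [Submodule.pow_succ] at hn
    exact (hB.eq_bot_or_eq_bot_of_mul_eq_bot hn).elim ih id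

theorem IsPrimeTS.eq_top_of_ne_bot_of_isArtinianRing [IsArtinianRing B]
    (hB : IsPrimeTS (⊥ : TwoSidedIdeal B)) {I : TwoSidedIdeal B} (hI : I ≠ ⊥) : I = ⊤ := by
  have : IsSemisimpleRing B := IsArtinianRing.isSemisimpleRing_iff_jacobson.2
    (hB.eq_bot_of_isNilpotent IsSemiprimaryRing.isNilpotent)
  obtain ⟨J, hIJ⟩ := exists_isCompl I.asIdeal
  have hmul : I.asIdeal * J = ⊥ := by
    rw [← le_bot_iff, ← hIJ.inf_eq_bot, Ideal.mul_le]
    exact fun x hx y hy => ⟨I.asIdeal.mul_mem_right y hx, J.mul_mem_left x hy⟩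
  have hI' : I.asIdeal ≠ ⊥ := fun h => hI (TwoSidedIdeal.ext fun x => by
    rw [← TwoSidedIdeal.mem_asIdeal, h, Ideal.mem_bot, TwoSidedIdeal.mem_bot])
  rw [(hB.eq_bot_or_eq_bot_of_mul_eq_bot hmul).resolve_left hI'] at hIJ
  rw [← TwoSidedIdeal.one_mem_iff, ← TwoSidedIdeal.mem_asIdeal, eq_top_of_isCompl_bot hIJ]
  trivial

end Artinian

section Incomparability

variable {D W T : Type*} [CommRing D] [Ring W] [Algebra D W] [Ring T] [Algebra D T]

theorem exists_smul_eq_of_mem_map (S : Submonoid D) {j : W →ₐ[D] T}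
    [IsLocalizedModule S j.toLinearMap] {I : TwoSidedIdeal W} {t : T} (ht : t ∈ I.map j) :
    ∃ s ∈ S, ∃ w ∈ I, s • t = j w := by
  have hsurj (t : T) : ∃ s ∈ S, ∃ w, s • t = j w := by
    obtain ⟨⟨w, s⟩, h⟩ := IsLocalizedModule.surj S j.toLinearMap t
    exact ⟨s, s.2, w, h⟩
  refine TwoSidedIdeal.span_induction (p := fun t _ => ∃ s ∈ S, ∃ w ∈ I, s • t = j w)
    ?_ ?_ ?_ ?_ ?_ ?_ ht
  · rintro _ ⟨w, hw, rfl⟩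
    exact ⟨1, S.one_mem, w, hw, one_smul _ _⟩
  · exact ⟨1, S.one_mem, 0, I.zero_mem, by simp⟩
  · rintro x y - - ⟨s, hs, v, hv, hsv⟩ ⟨s', hs', v', hv', hsv'⟩
    refine ⟨s * s', S.mul_mem hs hs', s' • v + s • v', I.add_mem (smul_mem_TS I _ hv)
      (smul_mem_TS I _ hv'), ?_⟩
    rw [smul_add, map_add, map_smul, map_smul, ← hsv, ← hsv', smul_smul, smul_smul, mul_comm s' s]
  · rintro x - ⟨s, hs, v, hv, hsv⟩
    exact ⟨s, hs, -v, I.neg_mem hv, by rw [smul_neg, hsv, map_neg]⟩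
  · rintro a x - ⟨s, hs, v, hv, hsv⟩
    obtain ⟨s', hs', w, hw⟩ := hsurj a
    refine ⟨s' * s, S.mul_mem hs' hs, w * v, I.mul_mem_left _ _ hv, ?_⟩
    rw [map_mul, ← hw, ← hsv, smul_mul_assoc, mul_smul_comm, smul_smul]
  · rintro b x - ⟨s, hs, v, hv, hsv⟩
    obtain ⟨s', hs', w, hw⟩ := hsurj b
    refine ⟨s * s', S.mul_mem hs hs', v * w, I.mul_mem_right _ _ hv, ?_⟩
    rw [map_mul, ← hw, ← hsv, smul_mul_assoc, mul_smul_comm, smul_smul]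

theorem isPrimeTS_bot_of_isLocalizedModule (S : Submonoid D) {j : W →ₐ[D] T}
    [IsLocalizedModule S j.toLinearMap] (hj : Function.Injective j)
    (hW : IsPrimeTS (⊥ : TwoSidedIdeal W)) : IsPrimeTS (⊥ : TwoSidedIdeal T) := by
  have hmem {s : D} (hs : s ∈ S) {t : T} {w : W} (hst : s • t = j w)
      (hw : w ∈ (⊥ : TwoSidedIdeal W)) : t ∈ (⊥ : TwoSidedIdeal T) := by
    rw [TwoSidedIdeal.mem_bot] at hw ⊢
    refine IsLocalizedModule.smul_injective j.toLinearMap (⟨s, hs⟩ : S) ?_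
    change s • t = s • 0
    rw [hst, hw, map_zero, smul_zero]
  refine ⟨fun htop => one_notMem_of_ne_top hW.1 ?_, fun a b hab => ?_⟩
  · have h1 : (1 : T) ∈ (⊥ : TwoSidedIdeal T) := htop ▸ trivial
    rw [TwoSidedIdeal.mem_bot] at h1 ⊢
    exact hj (by rw [map_one, map_zero, h1])
  · obtain ⟨⟨v, s⟩, hsv⟩ := IsLocalizedModule.surj S j.toLinearMap a
    obtain ⟨⟨w, s'⟩, hsw⟩ := IsLocalizedModule.surj S j.toLinearMap b
    refine (hW.2 v w fun r => (TwoSidedIdeal.mem_bot _).2 (hj ?_)).imp (hmem s.2 hsv)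
      (hmem s'.2 hsw)
    have hab' : a * j r * b = 0 := (TwoSidedIdeal.mem_bot _).1 (hab (j r))
    calc j (v * r * w) = ((s : D) • a) * j r * ((s' : D) • b) := by
          rw [map_mul, map_mul]
          exact congr_arg₂ (· * j r * ·) hsv.symm hsw.symm
      _ = j 0 := by rw [smul_mul_assoc, smul_mul_assoc, mul_smul_comm, hab', smul_zero, smul_zero,
          map_zero]

instance isLocalizedModule_includeRight (D W : Type*) [CommRing D] [Ring W] [Algebra D W] :
    IsLocalizedModule (nonZeroDivisors D) (Algebra.TensorProduct.includeRight :
      W →ₐ[D] FractionRing D ⊗[D] W).toLinearMap :=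
  inferInstanceAs (IsLocalizedModule _ (TensorProduct.mk D (FractionRing D) W 1))

theorem includeRight_injective_of_isTorsionFree (D W : Type*) [CommRing D] [Ring W]
    [Algebra D W] [Module.IsTorsionFree D W] : Function.Injective
      (Algebra.TensorProduct.includeRight : W →ₐ[D] FractionRing D ⊗[D] W) :=
  (IsLocalizedModule.injective_iff_isRegular (nonZeroDivisors D)
    (Algebra.TensorProduct.includeRight : W →ₐ[D] FractionRing D ⊗[D] W).toLinearMap).2 fun c =>
    (isRegular_iff_mem_nonZeroDivisors.2 c.2).isSMulRegular

theorem isTorsionFree_of_isPrimeTS_bot [Nontrivial D] (hinj : Function.Injective (algebraMap D W))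
    (hW : IsPrimeTS (⊥ : TwoSidedIdeal W)) : Module.IsTorsionFree D W := by
  refine ⟨fun r hr x y hxy => sub_eq_zero.1 ((TwoSidedIdeal.mem_bot _).1
    (hW.mem_of_smul_mem (a := r) (fun hr0 => hr.ne_zero (hinj ?_)) ?_))⟩
  · rw [map_zero, ← TwoSidedIdeal.mem_bot, ← mem_contractTS]
    exact hr0
  · rw [TwoSidedIdeal.mem_bot, smul_sub, sub_eq_zero]
    exact hxy

theorem IsPrimeTS.contractTS_ne_bot [IsDomain D] [Module.Finite D W]
    (hinj : Function.Injective (algebraMap D W)) (hW : IsPrimeTS (⊥ : TwoSidedIdeal W))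
    {I : TwoSidedIdeal W} (hI : I ≠ ⊥) : contractTS (C := D) I ≠ ⊥ := by
  let K := FractionRing D
  let j : W →ₐ[D] K ⊗[D] W := Algebra.TensorProduct.includeRight
  have := isTorsionFree_of_isPrimeTS_bot hinj hW
  have hj : Function.Injective j := includeRight_injective_of_isTorsionFree D W
  have : IsArtinianRing (K ⊗[D] W) := isArtinian_of_tower K inferInstance
  have hmap : I.map j ≠ ⊥ := fun h => hI <| le_bot_iff.1 fun w hw => by
    have hjw : j w ∈ I.map j := TwoSidedIdeal.subset_span ⟨w, hw, rfl⟩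
    rw [h, TwoSidedIdeal.mem_bot] at hjw
    exact (TwoSidedIdeal.mem_bot _).2 (hj (hjw.trans (map_zero j).symm))
  have hone : (1 : K ⊗[D] W) ∈ I.map j := by
    have hbot := isPrimeTS_bot_of_isLocalizedModule (nonZeroDivisors D) hj hW
    rw [hbot.eq_top_of_ne_bot_of_isArtinianRing hmap]
    trivial
  obtain ⟨s, hs, w, hw, hsw⟩ := exists_smul_eq_of_mem_map (nonZeroDivisors D) hone
  have hw' : algebraMap D W s = w := hj <| by
    rw [AlgHom.commutes, Algebra.algebraMap_eq_smul_one, hsw]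
  exact Submodule.ne_bot_iff _ |>.2
    ⟨s, mem_contractTS.2 (hw' ▸ hw), nonZeroDivisors.ne_zero hs⟩

theorem IsPrimeTS.contractTS_lt_contractTS {A R : Type*} [CommRing A] [Ring R] [Algebra A R]
    [Module.Finite A R] {P I : TwoSidedIdeal R} (hP : IsPrimeTS P) (hPI : P < I) :
    contractTS (C := A) P < contractTS I := by
  let p : Ideal A := P.asIdeal.comap (algebraMap A R)
  have : p.IsPrime := hP.contractTS_isPrime
  let : Algebra (A ⧸ p) (R ⧸ P.asIdeal) := Ideal.quotientAlgebra
  have : IsScalarTower A (A ⧸ p) (R ⧸ P.asIdeal) := .of_algebraMap_eq fun _ => rfl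
  have : Module.Finite (A ⧸ p) (R ⧸ P.asIdeal) := .of_restrictScalars_finite A _ _
  let I' : TwoSidedIdeal (R ⧸ P.asIdeal) :=
    (I.asIdeal.map (Ideal.Quotient.mk P.asIdeal)).toTwoSided
  have hI' (x : R) : Ideal.Quotient.mk P.asIdeal x ∈ I' ↔ x ∈ I := by
    rw [Ideal.mem_toTwoSided, Ideal.mem_quotient_iff_mem (TwoSidedIdeal.asIdeal.monotone hPI.le),
      TwoSidedIdeal.mem_asIdeal]
  have hI'_ne : I' ≠ ⊥ := by
    obtain ⟨x, hxI, hxP⟩ := SetLike.exists_of_lt hPI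
    intro h
    rw [← hI', h, TwoSidedIdeal.mem_bot, Ideal.Quotient.eq_zero_iff_mem] at hxI
    exact hxP hxI
  have hne : contractTS (C := A ⧸ p) I' ≠ ⊥ :=
    hP.bot_quotient.contractTS_ne_bot Ideal.algebraMap_quotient_injective hI'_ne
  obtain ⟨s, hsI, hs0⟩ := Submodule.exists_mem_ne_zero_of_ne_bot hne
  obtain ⟨s, rfl⟩ := Ideal.Quotient.mk_surjective s
  refine (contractTS_mono hPI.le).lt_of_not_ge fun hle => hs0 (Ideal.Quotient.eq_zero_iff_mem.2 ?_)
  exact hle (mem_contractTS.2 ((hI' _).1 (mem_contractTS.1 hsI)))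

end Incomparability

section GoingDown

variable {A R : Type*} [CommRing A] [Ring R] [Algebra A R]

theorem exists_aeval_eq_zero_map_eq_X_pow_of_mem_extendTS [Module.Finite A R] {q : Ideal A} {t : R}
    (ht : t ∈ extendTS R q) :
    ∃ g : A[X], aeval t g = 0 ∧ g.map (Ideal.Quotient.mk q) = X ^ g.natDegree := by
  obtain ⟨g, hg, -, hcoeff, hgt⟩ :=
    LinearMap.exists_monic_and_natDegree_eq_and_coeff_mem_pow_and_aeval_eq_zero
      A (Algebra.lmul A R t) q (by
        rintro _ ⟨x, rfl⟩
        exact mem_extendTS.1 ((extendTS R q).mul_mem_right _ _ ht))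
  refine ⟨g, ?_, ?_⟩
  · rw [aeval_algHom_apply] at hgt
    exact Algebra.lmul_injective (hgt.trans (map_zero _).symm)
  · ext i
    rw [coeff_map, coeff_X_pow]
    split_ifs with hi
    · rw [hi, hg.coeff_natDegree, map_one]
    · rcases lt_or_gt_of_ne hi with hlt | hgt
      · exact Ideal.Quotient.eq_zero_iff_mem.2
          (Ideal.pow_le_self (Nat.sub_ne_zero_of_lt hlt) (hcoeff i))
      · rw [coeff_eq_zero_of_natDegree_lt hgt, map_zero]

theorem exists_eq_X_pow_of_dvd_C_mul_X_pow {L : Type*} [Field L] {f : L[X]} (hf : f.Monic) {c : L}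
    (hc : c ≠ 0) {n : ℕ} (h : f ∣ C c * X ^ n) : ∃ i, f = X ^ i := by
  have hu : IsUnit (C c) := isUnit_C.2 hc.isUnit
  obtain ⟨i, -, hi⟩ := (dvd_prime_pow prime_X n).1 (hu.dvd_mul_left.1 h)
  exact ⟨i, eq_of_monic_of_associated hf (monic_X_pow i) hi⟩

theorem aeval_mem_extendTS {q : Ideal A} {f : A[X]} (hf : ∀ i, f.coeff i ∈ q) (t : R) :
    aeval t f ∈ extendTS R q := by
  rw [mem_extendTS, aeval_eq_sum_range]
  exact sum_mem fun i _ => Submodule.smul_mem_smul (hf i) trivial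

variable (R) in
/-- The `q`-saturation of `qR`, that is, the kernel of `R → R_q / qR_q`; the localization itself is
avoided. Going down amounts to finding a prime over it inside a given prime. -/
def saturationTS (q : Ideal A) [hq : q.IsPrime] : TwoSidedIdeal R :=
  TwoSidedIdeal.mk' {x | ∃ a ∉ q, a • x ∈ extendTS R q}
    ⟨1, q.one_notMem, by simp [(extendTS R q).zero_mem]⟩
    (by
      rintro x y ⟨a, ha, hx⟩ ⟨b, hb, hy⟩
      refine ⟨a * b, hq.mul_notMem ha hb, ?_⟩
      rw [smul_add, mul_comm, mul_smul, mul_comm, mul_smul]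
      exact (extendTS R q).add_mem (smul_mem_TS _ _ hx) (smul_mem_TS _ _ hy))
    (by
      rintro x ⟨a, ha, hx⟩
      exact ⟨a, ha, by simpa using hx⟩)
    (by
      rintro z x ⟨a, ha, hx⟩
      exact ⟨a, ha, by simpa [mul_smul_comm] using (extendTS R q).mul_mem_left z _ hx⟩)
    (by
      rintro x z ⟨a, ha, hx⟩
      exact ⟨a, ha, by simpa [smul_mul_assoc] using (extendTS R q).mul_mem_right _ z hx⟩)

theorem mem_saturationTS {q : Ideal A} [q.IsPrime] {x : R} :
    x ∈ saturationTS R q ↔ ∃ a ∉ q, a • x ∈ extendTS R q :=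
  TwoSidedIdeal.mem_mk' _ _ _ _ _ _ _

theorem extendTS_le_saturationTS (q : Ideal A) [q.IsPrime] : extendTS R q ≤ saturationTS R q :=
  fun _ hx => mem_saturationTS.2 ⟨1, q.one_notMem, by rwa [one_smul]⟩

theorem isMSystem_smul_compl {q : Ideal A} [hq : q.IsPrime] {P : TwoSidedIdeal R}
    (hP : IsPrimeTS P) : IsMSystem {x : R | ∃ a ∉ q, ∃ t ∉ P, a • t = x} := by
  refine ⟨⟨1, 1, q.one_notMem, 1, one_notMem_of_ne_top hP.1, one_smul _ _⟩, ?_⟩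
  rintro _ ⟨a, ha, t, ht, rfl⟩ _ ⟨b, hb, u, hu, rfl⟩
  obtain ⟨r, hr⟩ : ∃ r, t * r * u ∉ P := by
    by_contra! hcon
    exact (hP.2 t u hcon).elim ht hu
  refine ⟨r, a * b, hq.mul_notMem ha hb, _, hr, ?_⟩
  rw [smul_mul_assoc, smul_mul_assoc, mul_smul_comm, smul_smul]

variable [IsDomain A] [IsIntegrallyClosed A] [Module.IsTorsionFree A R]

theorem exists_monic_forall_dvd_of_aeval_eq_zero {t : R} (ht : IsIntegral A t) :
    ∃ φ : A[X], φ.Monic ∧ aeval t φ = 0 ∧ ∀ f : A[X], aeval t f = 0 → φ ∣ f := by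
  let K := FractionRing A
  let j : R →ₐ[A] K ⊗[A] R := Algebra.TensorProduct.includeRight
  have hj : Function.Injective j := includeRight_injective_of_isTorsionFree A R
  have haeval (f : A[X]) : aeval (j t) (f.map (algebraMap A K)) = j (aeval t f) := by
    rw [aeval_map_algebraMap, aeval_algHom_apply]
  have hdvd (f : A[X]) (hf : aeval t f = 0) : minpoly K (j t) ∣ f.map (algebraMap A K) :=
    minpoly.dvd _ _ (by rw [haeval, hf, map_zero])
  have hmonic : (minpoly K (j t)).Monic := minpoly.monic (ht.map j).tower_top
  obtain ⟨u, hu, hut⟩ := ht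
  obtain ⟨φ, hφ⟩ := IsIntegrallyClosed.eq_map_mul_C_of_dvd K hu (hdvd u hut)
  rw [hmonic.leadingCoeff, C_1, mul_one] at hφ
  have hinj : Function.Injective (algebraMap A K) := IsFractionRing.injective A K
  have hφmonic : φ.Monic := monic_of_injective hinj (hφ ▸ hmonic)
  refine ⟨φ, hφmonic, hj ?_, fun f hf => (map_dvd_map _ hinj hφmonic).1 (hφ ▸ hdvd f hf)⟩
  rw [← haeval, hφ, minpoly.aeval, map_zero]

-- If `g (at) = 0` with `g ≡ X ^ n` mod `q`, then the minimal polynomial `φ` of `t` divides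
-- `g (aX) ≡ a ^ n X ^ n` mod `q`, so `φ` is itself a power of `X` mod `q`.
theorem exists_pow_mem_extendTS_of_smul_mem [Module.Finite A R] {q : Ideal A} [q.IsPrime] {a : A}
    (ha : a ∉ q) {t : R} (hat : a • t ∈ extendTS R q) : ∃ m, t ^ m ∈ extendTS R q := by
  obtain ⟨φ, hφ, hφt, hdvd⟩ :=
    exists_monic_forall_dvd_of_aeval_eq_zero (Algebra.IsIntegral.isIntegral (R := A) t)
  obtain ⟨g, hgt, hg⟩ := exists_aeval_eq_zero_map_eq_X_pow_of_mem_extendTS hat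
  have hφg : φ ∣ g.comp (C a * X) := hdvd _ (by
    rw [aeval_comp, map_mul, aeval_C, aeval_X, ← Algebra.smul_def, hgt])
  let ρ := algebraMap A q.ResidueField
  have hρ {x : A} : ρ x = 0 ↔ x ∈ q := Ideal.algebraMap_residueField_eq_zero
  have hgρ : g.map ρ = X ^ g.natDegree := by
    have h := congrArg (Polynomial.map (algebraMap (A ⧸ q) q.ResidueField)) hg
    rwa [Polynomial.map_map, ← Ideal.Quotient.algebraMap_eq, ← IsScalarTower.algebraMap_eq,
      Polynomial.map_pow, map_X] at h
  obtain ⟨i, hi⟩ : ∃ i, φ.map ρ = X ^ i := by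
    refine exists_eq_X_pow_of_dvd_C_mul_X_pow (hφ.map ρ) (c := ρ a ^ g.natDegree)
      (pow_ne_zero _ (mt hρ.1 ha)) (n := g.natDegree) ?_
    convert Polynomial.map_dvd ρ hφg
    rw [Polynomial.map_comp, hgρ]
    simp [mul_pow]
  have hcoeff (n : ℕ) : (X ^ i - φ).coeff n ∈ q := by
    rw [← hρ, ← coeff_map, Polynomial.map_sub, hi]
    simp
  exact ⟨i, by simpa [hφt] using aeval_mem_extendTS hcoeff t⟩

theorem saturationTS_le [Module.Finite A R] {q : Ideal A} [q.IsPrime] {P : TwoSidedIdeal R}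
    (hP : IsPrimeTS P) (hqP : q ≤ contractTS P) : saturationTS R q ≤ P := by
  by_contra hcon
  have hlt : P < P ⊔ saturationTS R q := left_lt_sup.2 hcon
  obtain ⟨s, hs, hsP⟩ := SetLike.exists_of_lt (hP.contractTS_lt_contractTS (A := A) hlt)
  obtain ⟨x, hx, t, ht, hxt⟩ := TwoSidedIdeal.mem_sup.1 (mem_contractTS.1 hs)
  obtain ⟨a, ha, hat⟩ := mem_saturationTS.1 ht
  obtain ⟨m, hm⟩ := exists_pow_mem_extendTS_of_smul_mem ha hat
  have htm : t ^ m ∈ P := extendTS_le_iff.2 hqP hm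
  refine hsP ((hP.contractTS_isPrime (A := A)).mem_of_pow_mem m (mem_contractTS.2 ?_))
  rw [map_pow, ← hxt]
  rw [← TwoSidedIdeal.mem_asIdeal, ← Ideal.Quotient.eq_zero_iff_mem] at hx htm ⊢
  rw [map_pow, map_add, hx, zero_add, ← map_pow, htm]

theorem exists_isPrimeTS_le_contractTS_eq [Module.Finite A R] {q : Ideal A} [hq : q.IsPrime]
    {P : TwoSidedIdeal R} (hP : IsPrimeTS P) (hqP : q ≤ contractTS P) :
    ∃ Q, IsPrimeTS Q ∧ Q ≤ P ∧ contractTS Q = q := by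
  have hdisj : Disjoint {x : R | ∃ a ∉ q, ∃ t ∉ P, a • t = x} (saturationTS R q : Set R) := by
    rw [Set.disjoint_left]
    rintro _ ⟨a, ha, t, ht, rfl⟩ hat
    obtain ⟨b, hb, hbt⟩ := mem_saturationTS.1 hat
    rw [smul_smul] at hbt
    exact ht (saturationTS_le hP hqP (mem_saturationTS.2 ⟨_, hq.mul_notMem hb ha, hbt⟩))
  obtain ⟨Q, hQ, hle, hQdisj⟩ := exists_isPrimeTS_ge_disjoint (isMSystem_smul_compl hP) hdisj
  rw [Set.disjoint_left] at hQdisj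
  refine ⟨Q, hQ, fun x hx => ?_, le_antisymm (fun a ha => ?_)
    (extendTS_le_iff.1 ((extendTS_le_saturationTS q).trans hle))⟩
  · by_contra hxP
    exact hQdisj ⟨1, q.one_notMem, x, hxP, one_smul _ _⟩ hx
  · by_contra haq
    rw [mem_contractTS, Algebra.algebraMap_eq_smul_one] at ha
    exact hQdisj ⟨a, haq, 1, one_notMem_of_ne_top hP.1, rfl⟩ ha

end GoingDown

section CoheightBound

variable {A R : Type*} [CommRing A] [Ring R] [Algebra A R]

theorem moduleKdim_quotient_add_one_le {P Q : TwoSidedIdeal R} (hP : IsPrimeTS P) (hQ : Q ≠ ⊤)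
    (hPQ : P ≤ Q) (hlt : contractTS (C := A) P < contractTS Q) :
    moduleKdim R (R ⧸ Q.asIdeal) + 1 ≤ moduleKdim R (R ⧸ P.asIdeal) := by
  obtain ⟨c, hcQ, hcP⟩ := SetLike.exists_of_lt hlt
  let f : Module.End R (R ⧸ P.asIdeal) := DistribSMul.toLinearMap R _ c
  let π : (R ⧸ P.asIdeal) →ₗ[R] R ⧸ Q.asIdeal :=
    Submodule.factor (TwoSidedIdeal.asIdeal.monotone hPQ)
  have hπ : Function.Surjective π := Submodule.factor_surjective _
  have hf : Function.Injective f := by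
    refine (injective_iff_map_eq_zero f).2 fun x hx => ?_
    obtain ⟨x, rfl⟩ := Ideal.Quotient.mk_surjective x
    exact Ideal.Quotient.eq_zero_iff_mem.2
      (hP.mem_of_smul_mem hcP (Ideal.Quotient.eq_zero_iff_mem.1 hx))
  have hrange : LinearMap.range f ≤ LinearMap.ker π := by
    rintro _ ⟨x, rfl⟩
    obtain ⟨x, rfl⟩ := Ideal.Quotient.mk_surjective x
    refine Ideal.Quotient.eq_zero_iff_mem.2 (show c • x ∈ Q from ?_)
    rw [Algebra.smul_def]
    exact Q.mul_mem_right _ _ (mem_contractTS.1 hcQ)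
  have hf' : ¬ Function.Surjective f := fun hsurj =>
    one_notMem_of_ne_top hQ <| Ideal.Quotient.eq_zero_iff_mem.1 <|
      hrange (LinearMap.range_eq_top.2 hsurj ▸ trivial : (1 : R ⧸ P.asIdeal) ∈ LinearMap.range f)
  calc moduleKdim R (R ⧸ Q.asIdeal) + 1
      ≤ moduleKdim R ((R ⧸ P.asIdeal) ⧸ LinearMap.range f) + 1 := by
        gcongr
        exact moduleKdim_le_of_surjective (Submodule.liftQ _ π hrange)
          (LinearMap.range_eq_top.1 (by rw [Submodule.range_liftQ, LinearMap.range_eq_top.2 hπ]))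
    _ ≤ moduleKdim R (R ⧸ P.asIdeal) := moduleKdim_quotient_range_add_one_le hf hf'

theorem coheight_le_moduleKdim_quotient [Module.Finite A R] {P : TwoSidedIdeal R}
    (hP : IsPrimeTS P) {p : PrimeSpectrum A} (hp : contractTS P = p.asIdeal) :
    Order.coheight p ≤ moduleKdim R (R ⧸ P.asIdeal) := by
  refine Order.coheight_le fun s hs => ?_
  induction s using RelSeries.inductionOn generalizing P p with
  | singleton => simp
  | cons s q hq ih =>
    obtain rfl : q = p := by simpa using hs
    have hlt : contractTS (C := A) P < s.head.asIdeal := hp ▸ hq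
    obtain ⟨Q, hQ, hPQ, hQs⟩ := exists_isPrimeTS_ge_contractTS_eq hlt.le
    calc ((s.cons q hq).length : ℕ∞) = s.length + 1 := by simp
      _ ≤ moduleKdim R (R ⧸ Q.asIdeal) + 1 := by gcongr; exact ih hQ hQs rfl
      _ ≤ moduleKdim R (R ⧸ P.asIdeal) :=
        moduleKdim_quotient_add_one_le hP hQ.1 hPQ (hQs ▸ hlt)

theorem ringKrullDim_le_moduleKdim_of_injective [IsDomain A] [Module.Finite A R]
    (hinj : Function.Injective (algebraMap A R)) :
    ringKrullDim A ≤ moduleKdim R R := by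
  have hbot : contractTS (⊥ : TwoSidedIdeal R) ≤ (⊥ : Ideal A) := fun a ha =>
    (injective_iff_map_eq_zero _).1 hinj a (by simpa [mem_contractTS] using ha)
  obtain ⟨P, hP, -, hPbot⟩ := exists_isPrimeTS_ge_contractTS_eq hbot
  rw [ringKrullDim, ← Order.coheight_bot_eq_krullDim, WithBot.coe_le_coe]
  exact (coheight_le_moduleKdim_quotient hP hPbot).trans
    (moduleKdim_le_of_surjective P.asIdeal.mkQ P.asIdeal.mkQ_surjective)

theorem isTorsionFree_of_moduleKdim_eq [IsDomain A] [IsNoetherianRing A]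
    [FiniteRingKrullDim A] [Module.Finite A R] (hinj : Function.Injective (algebraMap A R))
    (hR : ∀ I : Ideal R, I ≠ ⊥ → moduleKdim R I = moduleKdim R R) :
    Module.IsTorsionFree A R := by
  refine .of_smul_eq_zero fun a x hax => ?_
  by_contra! ⟨ha, hx⟩
  let I : Ideal R := Ideal.span {x}
  have hI : I ≠ ⊥ := by simpa [I] using hx
  have : Nontrivial I := Submodule.nontrivial_iff_ne_bot.2 hI
  have : Module.Finite A I := Module.Finite.of_injective (I.subtype.restrictScalars A)
    Subtype.val_injective
  have hann : Module.annihilator A I ≠ ⊥ := by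
    refine (Submodule.ne_bot_iff _).2 ⟨a, Module.mem_annihilator.2 ?_, ha⟩
    rintro ⟨y, hy⟩
    obtain ⟨y, rfl⟩ := Ideal.mem_span_singleton'.1 hy
    exact Subtype.ext (by simp [← mul_smul_comm, hax])
  have hle : ringKrullDim A + 1 ≤ ringKrullDim A :=
    calc ringKrullDim A + 1
        ≤ (moduleKdim R R : WithBot ℕ∞) + 1 := by
          gcongr
          exact ringKrullDim_le_moduleKdim_of_injective hinj
      _ = (moduleKdim R I : WithBot ℕ∞) + 1 := by rw [hR I hI]
      _ ≤ (moduleKdim A I : WithBot ℕ∞) + 1 := by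
          gcongr
          exact WithBot.coe_le_coe.2 (moduleKdim_le_restrictScalars A)
      _ ≤ ringKrullDim A := moduleKdim_add_one_le_ringKrullDim hann
  rw [ringKrullDim, Order.krullDim_eq_length_of_finiteDimensionalOrder] at hle
  exact absurd hle (by norm_cast; omega)

end CoheightBound

section Height

theorem primeChainHeight_eq_height {α : Type*} [PartialOrder α] {isP : α → Prop}
    (P : {P : α // isP P}) : primeChainHeight isP P.1 = Order.height P := by
  apply le_antisymm
  · refine sSup_le ?_
    rintro _ ⟨m, rfl, f, hf, hfP, hlast⟩
    let s : LTSeries {P : α // isP P} := LTSeries.mk m (fun i => ⟨f i, hfP i⟩) fun _ _ h => hf h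
    exact Order.length_le_height (p := s) (Subtype.coe_le_coe.1 hlast.le)
  · refine Order.height_le fun s hs => le_sSup ⟨s.length, rfl, fun i => (s i).1,
      fun _ _ h => s.strictMono h, fun i => (s i).2, congrArg Subtype.val hs⟩

variable {A R : Type*} [CommRing A] [Ring R] [Algebra A R] [Module.Finite A R]

theorem IsMaximalTS.contractTS_isMaximal {M : TwoSidedIdeal R} (hM : IsMaximalTS M) :
    (contractTS (C := A) M).IsMaximal := by
  obtain ⟨m, hm, hMm⟩ :=
    Ideal.exists_le_maximal _ (hM.isPrimeTS.contractTS_isPrime (A := A)).ne_top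
  obtain ⟨P, hP, hMP, hPm⟩ := exists_isPrimeTS_ge_contractTS_eq hMm
  obtain rfl : M = P := hMP.eq_of_not_lt fun hlt => hP.1 (hM.2 P hlt)
  rwa [hPm]

theorem tsHeight_eq_height_contractTS [IsDomain A] [IsIntegrallyClosed A]
    [Module.IsTorsionFree A R] {P : TwoSidedIdeal R} (hP : IsPrimeTS P) :
    tsHeight P = (contractTS (C := A) P).height := by
  let contract (Q : {Q : TwoSidedIdeal R // IsPrimeTS Q}) : PrimeSpectrum A :=
    ⟨contractTS Q.1, Q.2.contractTS_isPrime⟩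
  have hmono : StrictMono contract := fun Q _ hlt => Q.2.contractTS_lt_contractTS hlt
  have hdown (Q : {Q : TwoSidedIdeal R // IsPrimeTS Q}) (q : PrimeSpectrum A)
      (hq : q < contract Q) : ∃ Q' < Q, contract Q' = q := by
    obtain ⟨Q', hQ', hle, hcontract⟩ :=
      exists_isPrimeTS_le_contractTS_eq Q.2 (show q.asIdeal ≤ contractTS Q.1 from hq.le)
    refine ⟨⟨Q', hQ'⟩, lt_of_le_of_ne hle ?_, PrimeSpectrum.ext hcontract⟩
    rintro rfl
    exact hq.ne (PrimeSpectrum.ext hcontract.symm)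
  rw [tsHeight, primeChainHeight_eq_height ⟨P, hP⟩,
    Order.height_eq_of_strictMono contract hmono hdown]
  exact (PrimeSpectrum.height_eq_orderHeight _).symm

theorem tsHeight_eq_tsKdim_of_isTorsionFree [IsDomain A] [IsIntegrallyClosed A]
    [Module.IsTorsionFree A R] (hA : ∀ m : Ideal A, m.IsMaximal → m.height = ringKrullDim A)
    {M : TwoSidedIdeal R} (hM : IsMaximalTS M) : tsHeight M = tsKdim R := by
  refine le_antisymm (le_iSup (fun P : {P // IsPrimeTS P} => tsHeight P.1) ⟨M, hM.isPrimeTS⟩)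
    (iSup_le fun P => WithBot.coe_le_coe.1 ?_)
  rw [tsHeight_eq_height_contractTS (A := A) P.2,
    tsHeight_eq_height_contractTS (A := A) hM.isPrimeTS, hA _ hM.contractTS_isMaximal]
  exact Ideal.height_le_ringKrullDim_of_ne_top P.2.contractTS_isPrime.ne_top

end Height

section Affine

theorem height_eq_of_isMaximal_mvPolynomial {k : Type*} [Field k] {d : ℕ}
    (m : Ideal (MvPolynomial (Fin d) k)) [m.IsMaximal] : m.height = d := by
  induction d with
  | zero =>
    have hle := Ideal.height_le_ringKrullDim_of_ne_top (Ideal.IsMaximal.ne_top ‹m.IsMaximal›)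
    simpa using hle
  | succ d ih =>
    let e := (MvPolynomial.finSuccEquiv k d).toRingEquiv
    let n : Ideal (MvPolynomial (Fin d) k)[X] := m.comap e.symm
    have : n.IsMaximal := Ideal.comap_isMaximal_of_surjective _ e.symm.surjective
    have : (n.comap C).IsMaximal := isMaximal_comap_C_of_isJacobsonRing n
    have : n.LiesOver (n.comap C) := ⟨rfl⟩
    calc m.height = n.height := (e.symm.height_comap m).symm
      _ = (n.comap C).height + 1 := height_eq_height_add_one _ n
      _ = (d + 1 : ℕ) := by rw [ih, Nat.cast_succ]

theorem exists_mvPolynomial_algebra_finite (k Z R : Type*) [Field k] [CommRing Z] [Algebra k Z]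
    [Ring R] [Nontrivial R] [Algebra k R] [Algebra Z R] [IsScalarTower k Z R]
    [Algebra.FiniteType k R] [Module.Finite Z R] (hinj : Function.Injective (algebraMap Z R)) :
    ∃ (d : ℕ) (_ : Algebra (MvPolynomial (Fin d) k) R),
      Module.Finite (MvPolynomial (Fin d) k) R ∧
        Function.Injective (algebraMap (MvPolynomial (Fin d) k) R) := by
  -- Artin–Tate: `R` is already finite over some affine subalgebra of `Z`.
  obtain ⟨B, hB, hBR⟩ := exists_subalgebra_of_fg k Z R Algebra.FiniteType.out Module.Finite.fg_top
  have : Algebra.FiniteType k B := B.fg_iff_finiteType.1 hB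
  have : Module.Finite B R := ⟨hBR⟩
  have : Nontrivial Z := (algebraMap Z R).domain_nontrivial
  obtain ⟨d, g, hg, hgfin⟩ := exists_finite_inj_algHom_of_fg k B
  let _ : Algebra (MvPolynomial (Fin d) k) B := g.toRingHom.toAlgebra
  have : Module.Finite (MvPolynomial (Fin d) k) B := hgfin
  let _ : Algebra (MvPolynomial (Fin d) k) R :=
    ((algebraMap B R).comp (algebraMap (MvPolynomial (Fin d) k) B)).toAlgebra'
      fun c => Algebra.commutes (algebraMap _ B c)
  have : IsScalarTower (MvPolynomial (Fin d) k) B R := .of_algebraMap_eq' rfl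
  exact ⟨d, inferInstance, Module.Finite.trans B R,
    (hinj.comp Subtype.val_injective).comp hg⟩

theorem equicodimensional_of_krull_homogeneous_general {k R : Type*} [Field k] [Ring R]
    [Algebra k R] [Algebra.FiniteType k R] [Module.Finite (Subring.center R) R]
    (hR : ∀ I : Ideal R, I ≠ ⊥ → moduleKdim R I = moduleKdim R R)
    {M : TwoSidedIdeal R} (hM : IsMaximalTS M) : tsHeight M = tsKdim R := by
  have : Nontrivial R := ⟨1, 0, fun h => one_notMem_of_ne_top hM.1 (h ▸ M.zero_mem)⟩
  let _ : Algebra k (Subring.center R) :=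
    ((algebraMap k R).codRestrict (Subring.center R) fun c =>
      Subring.mem_center_iff.2 fun x => (Algebra.commutes c x).symm).toAlgebra
  have : IsScalarTower k (Subring.center R) R := .of_algebraMap_eq' rfl
  obtain ⟨d, _, _, hinj⟩ :=
    exists_mvPolynomial_algebra_finite k (Subring.center R) R Subtype.val_injective
  have hdim : ringKrullDim (MvPolynomial (Fin d) k) = d := by simp
  have : FiniteRingKrullDim (MvPolynomial (Fin d) k) :=
    finiteRingKrullDim_iff_ne_bot_and_top.2 (hdim ▸
      ⟨WithBot.coe_ne_bot, WithBot.coe_injective.ne (ENat.natCast_ne_top d)⟩)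
  have : Module.IsTorsionFree (MvPolynomial (Fin d) k) R := isTorsionFree_of_moduleKdim_eq hinj hR
  refine tsHeight_eq_tsKdim_of_isTorsionFree (A := MvPolynomial (Fin d) k) (fun m hm => ?_) hM
  rw [hdim, height_eq_of_isMaximal_mvPolynomial m, WithBot.coe_natCast]

end Affine

/-- Let `R` be an affine `k`-algebra, `k` a field, which is a finite module over its
centre `Z(R)`, and suppose `R` is Krull homogeneous.  Then `R` is equicodimensional:
every maximal ideal of `R` has height equal to `Kdim R`. -/
theorem equicodimensional_of_krull_homogeneous {k R : Type*} [Field k] [Ring R]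
    [Algebra k R] [Algebra.FiniteType k R] [IsNoetherianRing R]
    [Module.Finite (Subring.center R) R]
    (hKh : (∀ I : Ideal R, I ≠ ⊥ → moduleKdim R I = moduleKdim R R) ∧
      (∀ I : Ideal Rᵐᵒᵖ, I ≠ ⊥ → moduleKdim Rᵐᵒᵖ I = moduleKdim Rᵐᵒᵖ Rᵐᵒᵖ)) :
    ∀ M : TwoSidedIdeal R, IsMaximalTS M → tsHeight M = tsKdim R :=
  fun _ => equicodimensional_of_krull_homogeneous_general (k := k) hKh.1
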